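/- Assume Condition (A1). For every K₁ > 0 and every δ ∈ [0,1) there exist constants A₁, α′₁ > 0, depending only on K₁, δ and the constants C_ξ, H_ξ, α_ξ of (A1), such that for every θ ∈ ℝⁿ: ℙ_θ( |Ĩ(K₁)| ≤ δ·|I_*(A₁,θ)| ) ≤ H₀·e^{−α′₁·ℓ(|I_*(A₁,θ)|)}. -/

import Mathlib

open MeasureTheory Finset
open scoped Classical

/-- `ell n k = k * log(q*n/k)` with `q = e^2`; equals `0` at `k = 0` by Lean's conventions. -/
noncomputable def ell (n k : ℕ) : ℝ := (k : ℝ) * Real.log (Real.exp 2 * n / k)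

lemma two_le_log_of_le {n s : ℕ} (hs : 0 < s) (hsn : s ≤ n) :
    2 ≤ Real.log (Real.exp 2 * n / s) := by
  have hs' : (0 : ℝ) < s := by exact_mod_cast hs
  have hsn' : (s : ℝ) ≤ n := by exact_mod_cast hsn
  have hn : (0 : ℝ) < n := hs'.trans_le hsn'
  rw [Real.le_log_iff_exp_le (by positivity), le_div_iff₀ hs']
  gcongr

lemma two_mul_le_ell {n s : ℕ} (hsn : s ≤ n) : 2 * (s : ℝ) ≤ ell n s := by
  rcases Nat.eq_zero_or_pos s with rfl | hs
  · simp [ell]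
  · have := two_le_log_of_le hs hsn
    unfold ell
    nlinarith [(Nat.cast_nonneg s : (0 : ℝ) ≤ s)]

lemma ell_nonneg {n s : ℕ} (hsn : s ≤ n) : 0 ≤ ell n s :=
  le_trans (by positivity) (two_mul_le_ell hsn)

lemma ell_le_two_mul_ell {n s t : ℕ} (hst : s ≤ t) (hts : t ≤ 2 * s) (htn : t ≤ n) :
    ell n t ≤ 2 * ell n s := by
  rcases Nat.eq_zero_or_pos s with rfl | hs
  · obtain rfl : t = 0 := by omega
    simp [ell]
  · have hs' : (0 : ℝ) < s := by exact_mod_cast hs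
    have hst' : (s : ℝ) ≤ t := by exact_mod_cast hst
    have hts' : (t : ℝ) ≤ 2 * s := by exact_mod_cast hts
    have ht' : (0 : ℝ) < t := hs'.trans_le hst'
    have hn : (0 : ℝ) < n := ht'.trans_le (by exact_mod_cast htn)
    have hlog : Real.log (Real.exp 2 * n / t) ≤ Real.log (Real.exp 2 * n / s) := by gcongr
    have hnonneg := two_le_log_of_le (hs.trans_le hst) htn
    calc ell n t ≤ (2 * s) * Real.log (Real.exp 2 * n / s) := by unfold ell; gcongr
      _ = 2 * ell n s := by unfold ell; ring

lemma half_mul_ell_le_ell_sub {n s k : ℕ} {δ : ℝ} (hsn : s ≤ n) (hδ1 : δ < 1)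
    (hk : (k : ℝ) ≤ δ * s) : (1 - δ) / 2 * ell n s ≤ ell n s - ell n k := by
  rcases Nat.eq_zero_or_pos s with rfl | hs
  · obtain rfl : k = 0 := by
      have : (k : ℝ) ≤ 0 := by simpa using hk
      exact_mod_cast le_antisymm this (Nat.cast_nonneg k)
    simp [ell]
  have hs' : (0 : ℝ) < s := by exact_mod_cast hs
  have hL := two_le_log_of_le hs hsn
  have hn : (0 : ℝ) < n := hs'.trans_le (by exact_mod_cast hsn)
  have hell : ell n k ≤ k * Real.log (Real.exp 2 * n / s) + (s - k) := by
    rcases Nat.eq_zero_or_pos k with rfl | hk0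
    · simp [ell]
    · have hk' : (0 : ℝ) < k := by exact_mod_cast hk0
      have hsplit : Real.log (Real.exp 2 * n / k)
          = Real.log (Real.exp 2 * n / s) + Real.log (s / k) := by
        rw [← Real.log_mul (by positivity) (by positivity)]
        congr 1
        field_simp
      have hlog := mul_le_mul_of_nonneg_left
        (Real.log_le_sub_one_of_pos (show (0 : ℝ) < s / k by positivity)) hk'.le
      have hcancel : (k : ℝ) * (s / k - 1) = s - k := by field_simp
      unfold ell
      rw [hsplit, mul_add]
      linarith
  have hprod : 0 ≤ ((s : ℝ) - k - (1 - δ) * s) * Real.log (Real.exp 2 * n / s) :=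
    mul_nonneg (by linarith) (by linarith)
  have hgap : 0 ≤ ((s : ℝ) - k) * (Real.log (Real.exp 2 * n / s) - 2) :=
    mul_nonneg (by nlinarith) (by linarith)
  have hs_ell : ell n s = s * Real.log (Real.exp 2 * n / s) := rfl
  rw [hs_ell]
  linarith

/-- If `I` minimizes a penalized criterion and `J` is disjoint from `I`, then adjoining `J` to `I`
does not pay off. -/
lemma sum_le_of_penalized_min_union {n : ℕ} {f : Fin n → ℝ} {c : ℝ} {I J : Finset (Fin n)}
    (hIJ : Disjoint I J)
    (hmin : (∑ i ∈ Iᶜ, f i) + c * ell n #I ≤ (∑ i ∈ (I ∪ J)ᶜ, f i) + c * ell n #(I ∪ J)) :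
    ∑ i ∈ J, f i ≤ c * (ell n #(I ∪ J) - ell n #I) := by
  have h₁ := sum_add_sum_compl I f
  have h₂ := sum_add_sum_compl (I ∪ J) f
  rw [sum_union hIJ] at h₂
  linarith

/-- If `I` minimizes a penalized criterion, then removing a subset `J` from `I` does not pay
off. -/
lemma le_sum_of_penalized_min_sdiff {n : ℕ} {f : Fin n → ℝ} {c : ℝ} {I J : Finset (Fin n)}
    (hJI : J ⊆ I)
    (hmin : (∑ i ∈ Iᶜ, f i) + c * ell n #I ≤ (∑ i ∈ (I \ J)ᶜ, f i) + c * ell n #(I \ J)) :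
    c * (ell n #I - ell n #(I \ J)) ≤ ∑ i ∈ J, f i := by
  have h₁ := sum_add_sum_compl I f
  have h₂ := sum_add_sum_compl (I \ J) f
  have h₃ := sum_sdiff (f := f) hJI
  linarith

/-- On the event that the preselector is smaller than `δ` times the active set `S`, the noise on
`S` is large. -/
lemma le_sum_noise_of_card_le {n : ℕ} {σ A K δ : ℝ} (hσ : 0 < σ) (hA : 0 < A) (hK : 0 < K)
    (hδ1 : δ < 1) {x θ : Fin n → ℝ} {I S : Finset (Fin n)}
    (hI : ∀ T : Finset (Fin n), (∑ i ∈ Iᶜ, x i ^ 2) + K * σ ^ 2 * ell n #I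
      ≤ (∑ i ∈ Tᶜ, x i ^ 2) + K * σ ^ 2 * ell n #T)
    (hS : ∀ T : Finset (Fin n), (∑ i ∈ Sᶜ, θ i ^ 2) + A * σ ^ 2 * ell n #S
      ≤ (∑ i ∈ Tᶜ, θ i ^ 2) + A * σ ^ 2 * ell n #T)
    (hcard : (#I : ℝ) ≤ δ * #S) :
    (A * (1 - δ) / 4 - 2 * K) * ell n #S ≤ ∑ i ∈ S, ((x i - θ i) / σ) ^ 2 := by
  have card_le (T : Finset (Fin n)) : #T ≤ n := by simpa using card_le_univ T
  have hσ2 : 0 < σ ^ 2 := by positivity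
  have hIS : #I ≤ #S := by
    have : (#I : ℝ) ≤ #S := by nlinarith [(Nat.cast_nonneg #S : (0 : ℝ) ≤ #S)]
    exact_mod_cast this
  have hX := sum_le_of_penalized_min_union (J := S \ I) disjoint_sdiff (hI _)
  have hθ := le_sum_of_penalized_min_sdiff (J := S \ I) sdiff_subset (hS _)
  have hunion : ell n #(I ∪ S \ I) ≤ 2 * ell n #S := by
    rw [union_sdiff_self_eq_union]
    refine ell_le_two_mul_ell (card_le_card subset_union_right) ?_ (card_le _)
    have := card_union_le I S
    omega
  have hsdiff : (1 - δ) / 2 * ell n #S ≤ ell n #S - ell n #(S \ (S \ I)) := by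
    refine half_mul_ell_le_ell_sub (card_le S) hδ1 (le_trans ?_ hcard)
    rw [sdiff_sdiff_right_self]
    exact_mod_cast card_le_card inter_subset_right
  have hX' : ∑ i ∈ S \ I, x i ^ 2 ≤ σ ^ 2 * (K * (2 * ell n #S)) := by
    refine hX.trans ?_
    rw [mul_comm K (σ ^ 2), mul_assoc]
    gcongr
    linarith [ell_nonneg (card_le I)]
  have hθ' : σ ^ 2 * (A * ((1 - δ) / 2 * ell n #S)) ≤ ∑ i ∈ S \ I, θ i ^ 2 := by
    refine le_trans ?_ hθ
    rw [mul_comm A (σ ^ 2), mul_assoc]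
    gcongr
  have hpoint : ∑ i ∈ S \ I, θ i ^ 2
      ≤ 2 * ∑ i ∈ S \ I, x i ^ 2 + 2 * σ ^ 2 * ∑ i ∈ S \ I, ((x i - θ i) / σ) ^ 2 := by
    rw [mul_sum, mul_sum, ← sum_add_distrib]
    refine sum_le_sum fun i _ => ?_
    have : 2 * σ ^ 2 * ((x i - θ i) / σ) ^ 2 = 2 * (x i - θ i) ^ 2 := by field_simp
    rw [this]
    nlinarith [sq_nonneg (2 * x i - θ i)]
  have hsub : ∑ i ∈ S \ I, ((x i - θ i) / σ) ^ 2 ≤ ∑ i ∈ S, ((x i - θ i) / σ) ^ 2 :=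
    sum_le_sum_of_subset_of_nonneg sdiff_subset fun _ _ _ => sq_nonneg _
  refine le_trans (le_of_mul_le_mul_left ?_ (show 0 < 2 * σ ^ 2 by positivity)) hsub
  linarith

theorem stmt_3 (Cξ Hξ αξ : ℝ) (hCξ : 0 < Cξ) (hHξ : 0 < Hξ) (hαξ : 0 < αξ) (K₁ δ : ℝ) (hK₁ : 0 < K₁) (hδ : 0 ≤ δ) (hδ1 : δ < 1) :
    ∃ A₁ α₁' : ℝ, 0 < A₁ ∧ 0 < α₁' ∧
      ∀ (n : ℕ) (σ : ℝ), 0 < σ →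
        ∀ P : (Fin n → ℝ) → Measure (Fin n → ℝ),
          (∀ θ, IsProbabilityMeasure (P θ)) →
          (∀ (θ : Fin n → ℝ) (I : Finset (Fin n)) (M : ℝ), 0 ≤ M →
            P θ {x | Cξ * I.card + M ≤ ∑ i ∈ I, ((x i - θ i) / σ) ^ 2}
              ≤ ENNReal.ofReal (Hξ * Real.exp (-αξ * M))) →
          ∀ Itil : (Fin n → ℝ) → Finset (Fin n),
            (∀ (x : Fin n → ℝ) (I : Finset (Fin n)),
              (∑ i ∈ (Itil x)ᶜ, x i ^ 2) + K₁ * σ ^ 2 * ell n (Itil x).card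
                ≤ (∑ i ∈ Iᶜ, x i ^ 2) + K₁ * σ ^ 2 * ell n I.card) →
            ∀ (θ : Fin n → ℝ) (Istar : Finset (Fin n)),
              (∀ I : Finset (Fin n),
                (∑ i ∈ Istarᶜ, θ i ^ 2) + A₁ * σ ^ 2 * ell n Istar.card
                  ≤ (∑ i ∈ Iᶜ, θ i ^ 2) + A₁ * σ ^ 2 * ell n I.card) →
              P θ {x | ((Itil x).card : ℝ) ≤ δ * Istar.card}
                ≤ ENNReal.ofReal (Hξ / (1 - Real.exp (-1)) * Real.exp (-α₁' * ell n Istar.card)) := by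
  refine ⟨4 * (Cξ + 1 + 2 * K₁) / (1 - δ), αξ, div_pos (by linarith) (by linarith), hαξ, ?_⟩
  intro n σ hσ P _ hA1 Itil hItil θ Istar hIstar
  have hδ' : 0 < 1 - δ := by linarith
  have hcard : #Istar ≤ n := by simpa using card_le_univ Istar
  have hsub : {x | ((Itil x).card : ℝ) ≤ δ * Istar.card} ⊆
      {x | Cξ * Istar.card + ell n Istar.card ≤ ∑ i ∈ Istar, ((x i - θ i) / σ) ^ 2} := by
    intro x hx
    have hnoise := le_sum_noise_of_card_le hσ (div_pos (by linarith) hδ') hK₁ hδ1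
      (hItil x) hIstar hx
    have hcoef : 4 * (Cξ + 1 + 2 * K₁) / (1 - δ) * (1 - δ) / 4 - 2 * K₁ = Cξ + 1 := by
      rw [div_mul_cancel₀ _ hδ'.ne']
      ring
    rw [hcoef] at hnoise
    have hell : (#Istar : ℝ) ≤ ell n #Istar := by
      linarith [two_mul_le_ell hcard, (Nat.cast_nonneg #Istar : (0 : ℝ) ≤ #Istar)]
    have := mul_le_mul_of_nonneg_left hell hCξ.le
    simp only [Set.mem_ofPred_eq]
    linarith
  have hH : Hξ ≤ Hξ / (1 - Real.exp (-1)) := by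
    rw [le_div_iff₀ (by simp)]
    nlinarith [Real.exp_pos (-1)]
  refine (measure_mono hsub).trans ((hA1 θ Istar _ (ell_nonneg hcard)).trans ?_)
  gcongr
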